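/- Let K = GF(2) and f : V → V nilpotent on a finite-dimensional K-vector space. Then every characteristic subspace of V is hyperinvariant if and only if: at most two Ulm invariants of (V, f) are equal to 1, and if exactly two are equal to 1 then they correspond to successive integers (i.e., if d(i) = d(j) = 1 with i < j then j = i + 1). -/

import Mathlib

open LinearMap

variable {K : Type*} [Field K] {V : Type*} [AddCommGroup V] [Module K V]

/-- `X` is hyperinvariant for `f`: invariant under every endomorphism commuting with `f`. -/
def Hinv (f : V →ₗ[K] V) (X : Submodule K V) : Prop :=
  ∀ g : V →ₗ[K] V, g ∘ₗ f = f ∘ₗ g → X.map g ≤ X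

/-- `X` is characteristic for `f`: `f`-invariant and fixed by every automorphism commuting with `f`. -/
def Chinv (f : V →ₗ[K] V) (X : Submodule K V) : Prop :=
  X.map f ≤ X ∧
    ∀ α : V ≃ₗ[K] V, (α : V →ₗ[K] V) ∘ₗ f = f ∘ₗ (α : V →ₗ[K] V) →
      X.map (α : V →ₗ[K] V) = X

/-- The cyclic subspace generated by `x`. -/
def cyc (f : V →ₗ[K] V) (x : V) : Submodule K V :=
  Submodule.span K (Set.range fun i : ℕ => (f ^ i) x)

/-- `x` has exponent `ℓ`. -/
def ExpEq (f : V →ₗ[K] V) (x : V) (ℓ : ℕ) : Prop :=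
  (f ^ ℓ) x = 0 ∧ ∀ j < ℓ, (f ^ j) x ≠ 0

/-- `x` has height `q`. -/
def HeightEq (f : V →ₗ[K] V) (x : V) (q : ℕ) : Prop :=
  x ∈ LinearMap.range (f ^ q) ∧ x ∉ LinearMap.range (f ^ (q + 1))

/-- The `r`-th Ulm invariant: number of Jordan blocks of size `r` (for `r ≥ 1`). -/
noncomputable def ulm (f : V →ₗ[K] V) (r : ℕ) : ℕ :=
  Module.finrank K ↥(LinearMap.ker f ⊓ LinearMap.range (f ^ (r - 1))) -
    Module.finrank K ↥(LinearMap.ker f ⊓ LinearMap.range (f ^ r))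

/-- `u` is a generator tuple with exponents `t`. -/
def IsGenTuple {k : ℕ} (f : V →ₗ[K] V) (u : Fin k → V) (t : Fin k → ℕ) : Prop :=
  (∀ i, ExpEq f (u i) (t i)) ∧ DirectSum.IsInternal (fun i => cyc f (u i))

/-- The summand `⟨U_a⟩` of all cyclic subspaces whose generator has exponent `a`. -/
def subU {k : ℕ} (f : V →ₗ[K] V) (u : Fin k → V) (t : Fin k → ℕ) (a : ℕ) : Submodule K V :=
  ⨆ i ∈ {i : Fin k | t i = a}, cyc f (u i)

/-!
Regard `V` as a `K[X]`-module with `X` acting by `f`. Hyperinvariant subspaces are then its fully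
invariant submodules, characteristic subspaces those stable under module automorphisms, and `V` is
a direct sum of cyclic modules `K[X] ⧸ (X ^ t)`, of which `ulm f r` have `t = r`.

If `h` is a nilpotent endomorphism then `1 + h` is an automorphism, so a characteristic submodule
`S` is stable under every homomorphism from one summand to another. It is therefore fully invariant
as soon as it contains the components of each of its elements `x`. A summand isomorphic to another
one poses no problem (go there and back). For two summands of exponents `n` and `n + 1`, one of any
two given elements is the image of the other, so `S` contains one of the two components; thus at
most one component can be missing, and then none is.

If `a + 1` and `b + 1 ≥ a + 3` each occur exactly once as exponents, with generators `u` and `v`,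
then over a residue field with two elements every automorphism fixes `u` and `X • v` modulo the
obvious smaller fully invariant submodules. Hence the diagonal spanned by `u + X • v` is
characteristic modulo these, while the projection onto the summand of `u` maps it to `u`.
-/

section Characteristic

variable {R M N : Type*} [Ring R] [AddCommGroup M] [Module R M] [AddCommGroup N] [Module R N]

/-- A characteristic submodule, mapped into itself by every automorphism of the module. Applied to
inverses, the inclusion becomes the equality used for subspaces in `Chinv`. -/
def IsCharacteristic (S : Submodule R M) : Prop :=
  ∀ α : M ≃ₗ[R] M, S ≤ S.comap (α : M →ₗ[R] M)

theorem IsCharacteristic.apply_mem_of_isNilpotent {S : Submodule R M} (hS : IsCharacteristic S)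
    {h : Module.End R M} (hh : IsNilpotent h) {x : M} (hx : x ∈ S) : h x ∈ S := by
  obtain ⟨α, hα⟩ := hh.isUnit_one_add
  have hx' : α.1 x ∈ S := hS (LinearMap.GeneralLinearGroup.toLinearEquiv α) hx
  rw [hα, LinearMap.add_apply, Module.End.one_apply] at hx'
  exact (S.add_mem_iff_right hx).1 hx'

variable (R M) in
/-- The property that the characteristic submodules of a module are fully invariant. For `AEval' f`
it says that the characteristic subspaces for `f` are hyperinvariant. -/
def CharacteristicIsFullyInvariant : Prop :=
  ∀ S : Submodule R M, IsCharacteristic S → S.IsFullyInvariant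

theorem CharacteristicIsFullyInvariant.of_equiv (e : M ≃ₗ[R] N)
    (hM : CharacteristicIsFullyInvariant R M) : CharacteristicIsFullyInvariant R N := by
  intro S hS g y hy
  have hchar : IsCharacteristic (S.comap (e : M →ₗ[R] N)) := fun α x hx ↦ by
    simpa using hS (e.symm ≪≫ₗ α ≪≫ₗ e) hx
  simpa using hM _ hchar (e.symm ∘ₗ g ∘ₗ e) (show e.symm y ∈ S.comap (e : M →ₗ[R] N) by simpa)

theorem characteristicIsFullyInvariant_congr (e : M ≃ₗ[R] N) :
    CharacteristicIsFullyInvariant R M ↔ CharacteristicIsFullyInvariant R N :=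
  ⟨.of_equiv e, .of_equiv e.symm⟩

variable (R M N) in
/-- Any element of one module and any element of the other are related by a homomorphism in one of
the two directions. Between two summands, this puts one of the two components of any element of a
characteristic submodule into that submodule. -/
def HomComparable : Prop :=
  ∀ (a : M) (b : N), (∃ φ : M →ₗ[R] N, φ a = b) ∨ ∃ ψ : N →ₗ[R] M, ψ b = a

theorem HomComparable.symm (h : HomComparable R M N) : HomComparable R N M :=
  fun b a ↦ (h a b).symm

theorem homComparable_of_subsingleton [Subsingleton M] : HomComparable R M N :=
  fun _ _ ↦ .inr ⟨0, Subsingleton.elim _ _⟩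

end Characteristic

section Pi

variable {R ι : Type*} [Ring R] [DecidableEq ι] {N : ι → Type*}
  [∀ i, AddCommGroup (N i)] [∀ i, Module R (N i)] {S : Submodule R (∀ i, N i)} {x : ∀ i, N i}
  {i j : ι}

theorem IsCharacteristic.single_map_mem (hS : IsCharacteristic S) (hij : i ≠ j)
    (φ : N j →ₗ[R] N i) (hx : x ∈ S) : Pi.single i (φ (x j)) ∈ S := by
  let h : Module.End R (∀ i, N i) := LinearMap.single R N i ∘ₗ φ ∘ₗ LinearMap.proj j
  have hh : IsNilpotent h := ⟨2, LinearMap.ext fun y ↦ by simp [h, pow_two, hij.symm]⟩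
  exact hS.apply_mem_of_isNilpotent hh hx

theorem IsCharacteristic.single_apply_mem_of_equiv (hS : IsCharacteristic S) (hij : i ≠ j)
    (e : N i ≃ₗ[R] N j) (hx : x ∈ S) : Pi.single i (x i) ∈ S := by
  simpa using hS.single_map_mem hij e.symm.toLinearMap (hS.single_map_mem hij.symm e.toLinearMap hx)

theorem IsCharacteristic.single_apply_mem_or (hS : IsCharacteristic S) (hij : i ≠ j)
    (h : HomComparable R (N i) (N j)) (hx : x ∈ S) :
    Pi.single i (x i) ∈ S ∨ Pi.single j (x j) ∈ S := by
  rcases h (x i) (x j) with ⟨φ, hφ⟩ | ⟨ψ, hψ⟩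
  · exact .inr (hφ ▸ hS.single_map_mem hij.symm φ hx)
  · exact .inl (hψ ▸ hS.single_map_mem hij ψ hx)

variable [Finite ι]

theorem single_apply_mem_of_forall_ne (hx : x ∈ S) (h : ∀ j ≠ i, Pi.single j (x j) ∈ S) :
    Pi.single i (x i) ∈ S := by
  cases nonempty_fintype ι
  rw [← Finset.univ_sum_single x, ← Finset.add_sum_erase _ _ (Finset.mem_univ i)] at hx
  exact (S.add_mem_iff_left (S.sum_mem fun j hj ↦ h j (Finset.ne_of_mem_erase hj))).1 hx

-- By comparability at most one component of `x` can fail to lie in `S`, hence none does.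
theorem IsCharacteristic.single_apply_mem (hS : IsCharacteristic S)
    (hN : ∀ i j, i ≠ j → HomComparable R (N i) (N j) ∨
      (∃ k ≠ i, Nonempty (N i ≃ₗ[R] N k)) ∨ ∃ k ≠ j, Nonempty (N j ≃ₗ[R] N k))
    (hx : x ∈ S) (i : ι) : Pi.single i (x i) ∈ S := by
  by_contra hi
  refine hi (single_apply_mem_of_forall_ne hx fun j hji ↦ ?_)
  rcases hN i j hji.symm with hcomp | ⟨k, hk, ⟨e⟩⟩ | ⟨k, hk, ⟨e⟩⟩
  · exact (hS.single_apply_mem_or hji.symm hcomp hx).resolve_left hi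
  · exact absurd (hS.single_apply_mem_of_equiv hk.symm e hx) hi
  · exact hS.single_apply_mem_of_equiv hk.symm e hx

theorem IsCharacteristic.isFullyInvariant_of_single_apply_mem (hS : IsCharacteristic S)
    (hN : ∀ i (g : Module.End R (N i)) (a : N i), ∃ r : R, g a = r • a)
    (hsingle : ∀ x ∈ S, ∀ i, Pi.single i (x i) ∈ S) : S.IsFullyInvariant := by
  intro g x hx
  cases nonempty_fintype ι
  rw [Submodule.mem_comap, ← Finset.univ_sum_single x, map_sum]
  refine S.sum_mem fun j _ ↦ ?_
  rw [← Finset.univ_sum_single (g _)]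
  refine S.sum_mem fun i _ ↦ ?_
  let g' : N j →ₗ[R] N i := LinearMap.proj i ∘ₗ g ∘ₗ LinearMap.single R N j
  change Pi.single i (g' (x j)) ∈ S
  rcases eq_or_ne i j with rfl | hij
  · obtain ⟨r, hr⟩ := hN i g' (x i)
    rw [hr, Pi.single_smul]
    exact S.smul_mem r (hsingle x hx i)
  · exact hS.single_map_mem hij g' hx

end Pi

section PrimePower

variable {R : Type*} [CommRing R]

theorem exists_quotient_span_singleton_hom {r s c : R} (h : s ∣ r * c) :
    ∃ φ : (R ⧸ R ∙ r) →ₗ[R] R ⧸ R ∙ s,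
      ∀ x : R, φ (Submodule.Quotient.mk x) = Submodule.Quotient.mk (c * x) := by
  refine ⟨Submodule.mapQ _ _ (LinearMap.mulLeft R c) ?_, fun x ↦ rfl⟩
  rw [Submodule.span_singleton_le_iff_mem, Submodule.mem_comap, LinearMap.mulLeft_apply, mul_comm]
  exact Ideal.mem_span_singleton.2 h

theorem exists_end_quotient_apply_eq_smul (I : Ideal R) (g : Module.End R (R ⧸ I)) (a : R ⧸ I) :
    ∃ r : R, g a = r • a := by
  obtain ⟨x, rfl⟩ := Submodule.Quotient.mk_surjective I a
  obtain ⟨r, hr⟩ := Submodule.Quotient.mk_surjective I (g (Submodule.Quotient.mk 1))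
  refine ⟨r, ?_⟩
  rw [← mul_one x, ← smul_eq_mul, Submodule.Quotient.mk_smul, map_smul, ← hr, smul_comm r x,
    ← Submodule.Quotient.mk_smul I r, smul_eq_mul, mul_one]

variable [IsPrincipalIdealRing R] {π : R}

theorem exists_pow_dvd_one_sub_mul (hπ : Irreducible π) (n : ℕ) {b : R} (hb : ¬ π ∣ b) :
    ∃ c, π ^ n ∣ 1 - c * b := by
  obtain ⟨d, c, h⟩ := ((hπ.coprime_iff_not_dvd).2 hb).pow_left (m := n)
  exact ⟨c, d, by rw [← h]; ring⟩

theorem exists_pow_dvd_sub_mul_or (hπ : Irreducible π) (n : ℕ) (a b : R) :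
    (∃ c, π ^ n ∣ a - c * b) ∨ ∃ c, π ^ n ∣ b - c * (π * a) := by
  induction n generalizing a b with
  | zero => exact .inl ⟨0, by simp⟩
  | succ n ih =>
    by_cases hb : π ∣ b
    · obtain ⟨b, rfl⟩ := hb
      by_cases ha : π ∣ a
      · obtain ⟨a, rfl⟩ := ha
        have mul_left_dvd {x y c : R} (h : π ^ n ∣ x - c * y) :
            π ^ (n + 1) ∣ π * x - c * (π * y) := by
          rw [mul_left_comm, ← mul_sub, pow_succ']
          exact mul_dvd_mul_left π h
        exact (ih a b).imp (fun ⟨c, hc⟩ ↦ ⟨c, mul_left_dvd hc⟩) fun ⟨c, hc⟩ ↦ ⟨c, mul_left_dvd hc⟩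
      · obtain ⟨c, hc⟩ := exists_pow_dvd_one_sub_mul hπ (n + 1) ha
        exact .inr ⟨b * c, (hc.mul_left (π * b)).trans (dvd_of_eq (by ring))⟩
    · obtain ⟨c, hc⟩ := exists_pow_dvd_one_sub_mul hπ (n + 1) hb
      exact .inl ⟨a * c, (hc.mul_left a).trans (dvd_of_eq (by ring))⟩

theorem homComparable_quotient_pow_succ (hπ : Irreducible π) (n : ℕ) :
    HomComparable R (R ⧸ R ∙ π ^ n) (R ⧸ R ∙ π ^ (n + 1)) := by
  intro a b
  obtain ⟨a, rfl⟩ := Submodule.Quotient.mk_surjective _ a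
  obtain ⟨b, rfl⟩ := Submodule.Quotient.mk_surjective _ b
  rcases exists_pow_dvd_sub_mul_or hπ (n + 1) a b with ⟨c, hc⟩ | ⟨c, hc⟩
  · obtain ⟨ψ, hψ⟩ : ∃ ψ : (R ⧸ R ∙ π ^ (n + 1)) →ₗ[R] R ⧸ R ∙ π ^ n,
        ∀ x : R, ψ (Submodule.Quotient.mk x) = Submodule.Quotient.mk (c * x) :=
      exists_quotient_span_singleton_hom ((pow_dvd_pow π n.le_succ).mul_right c)
    refine .inr ⟨ψ, ?_⟩
    rw [hψ, eq_comm, Submodule.Quotient.eq, Ideal.mem_span_singleton]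
    exact (pow_dvd_pow π n.le_succ).trans hc
  · obtain ⟨φ, hφ⟩ : ∃ φ : (R ⧸ R ∙ π ^ n) →ₗ[R] R ⧸ R ∙ π ^ (n + 1),
        ∀ x : R, φ (Submodule.Quotient.mk x) = Submodule.Quotient.mk (c * π * x) :=
      exists_quotient_span_singleton_hom (Dvd.intro_left c (by ring))
    refine .inl ⟨φ, ?_⟩
    rw [hφ, eq_comm, Submodule.Quotient.eq, Ideal.mem_span_singleton, mul_assoc]
    exact hc

theorem characteristicIsFullyInvariant_pi_quotient {ι : Type*} [Finite ι] (hπ : Irreducible π)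
    (t : ι → ℕ) (ht : ∀ i j, 1 ≤ i → (∃! k, t k = i) → (∃! k, t k = j) → i < j → j = i + 1) :
    CharacteristicIsFullyInvariant R (∀ k, R ⧸ R ∙ π ^ t k) := by
  classical
  have equiv_of_not_unique (k : ι) (hk : ¬ ∃! l, t l = t k) :
      ∃ l ≠ k, Nonempty ((R ⧸ R ∙ π ^ t k) ≃ₗ[R] R ⧸ R ∙ π ^ t l) := by
    obtain ⟨l, hl, hlk⟩ : ∃ l, t l = t k ∧ l ≠ k := by
      by_contra! h
      exact hk ⟨k, rfl, h⟩
    exact ⟨l, hlk, ⟨Submodule.quotEquivOfEq _ _ (by rw [hl])⟩⟩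
  have comparable_of_lt {k l : ι} (hk : ∃! i, t i = t k) (hl : ∃! i, t i = t l)
      (hkl : t k < t l) : HomComparable R (R ⧸ R ∙ π ^ t k) (R ⧸ R ∙ π ^ t l) := by
    rcases Nat.eq_zero_or_pos (t k) with h0 | hpos
    · have : Subsingleton (R ⧸ R ∙ π ^ t k) := by
        rw [Submodule.Quotient.subsingleton_iff, h0, pow_zero]
        exact Ideal.span_singleton_one
      exact homComparable_of_subsingleton
    · rw [ht _ _ hpos hk hl hkl]
      exact homComparable_quotient_pow_succ hπ (t k)
  intro S hS
  refine hS.isFullyInvariant_of_single_apply_mem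
    (fun k ↦ exists_end_quotient_apply_eq_smul _)
    fun x hx k ↦ hS.single_apply_mem (fun k l hkl ↦ ?_) hx k
  by_cases hk : ∃! i, t i = t k
  · by_cases hl : ∃! i, t i = t l
    · left
      rcases lt_trichotomy (t k) (t l) with h | h | h
      · exact comparable_of_lt hk hl h
      · exact absurd (hk.unique rfl h.symm) hkl
      · exact (comparable_of_lt hl hk h).symm
    · exact .inr (.inr (equiv_of_not_unique l hl))
  · exact .inr (.inl (equiv_of_not_unique k hk))

end PrimePower

section TwoLayers

variable {R M : Type*} [CommRing R] [AddCommGroup M] [Module R M] {A B C Y : Submodule R M}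
  {u v : M} {π : R}

theorem apply_sub_mem_of_mem_or_sub_mem (hA : A.IsFullyInvariant) (hB : B.IsFullyInvariant)
    (hu : ∀ x ∈ A, x ∈ B ∨ x - u ∈ B) (α : M ≃ₗ[R] M) {x : M} (hx : x ∈ A) : α x - x ∈ B := by
  rcases hu x hx with hxB | hxu
  · exact B.sub_mem (hB (α : M →ₗ[R] M) hxB) hxB
  rcases hu (α x) (hA (α : M →ₗ[R] M) hx) with hαx | hαxu
  · have hxB : x ∈ B := by simpa using hB (α.symm : M →ₗ[R] M) hαx
    exact B.sub_mem hαx hxB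
  · simpa using B.sub_mem hαxu hxu

theorem isCharacteristic_of_inf_le (hA : A.IsFullyInvariant) (hB : B.IsFullyInvariant)
    (hC : C.IsFullyInvariant) (hu : ∀ x ∈ A, x ∈ B ∨ x - u ∈ B) (hv : ∀ x ∈ A, x ∈ C ∨ x - v ∈ C)
    (hBCY : B ⊓ C ≤ Y) (hYA : Y ≤ A) : IsCharacteristic Y := by
  intro α x hx
  have hdiff : α x - x ∈ Y := hBCY
    ⟨apply_sub_mem_of_mem_or_sub_mem hA hB hu α (hYA hx),
      apply_sub_mem_of_mem_or_sub_mem hA hC hv α (hYA hx)⟩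
  exact (Y.sub_mem_iff_left hx).1 hdiff

theorem notMem_sup_span_add (hres : ∀ r : R, π ∣ r ∨ π ∣ r - 1) (huB : u ∉ B) (hvB : v ∈ B)
    (hπu : π • u ∈ B) (huC : u ∈ C) (hvC : v ∉ C) (hπv : π • v ∈ C) :
    u ∉ B ⊓ C ⊔ R ∙ (u + v) := by
  intro hmem
  obtain ⟨d, ⟨hdB, hdC⟩, w, hw, hdw⟩ := Submodule.mem_sup.1 hmem
  obtain ⟨r, rfl⟩ := Submodule.mem_span_singleton.1 hw
  rcases hres r with ⟨s, rfl⟩ | ⟨s, hs⟩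
  · refine huB (hdw ▸ B.add_mem hdB ?_)
    rw [smul_add, mul_comm, mul_smul]
    exact B.add_mem (B.smul_mem s hπu) (B.smul_mem _ hvB)
  · obtain rfl : r = s * π + 1 := by rw [mul_comm, ← hs, sub_add_cancel]
    have hv : v = -(d + (s * π) • u + s • π • v) := by
      rw [eq_sub_of_add_eq hdw]
      module
    exact hvC (hv ▸ C.neg_mem (C.add_mem (C.add_mem hdC (C.smul_mem _ huC)) (C.smul_mem s hπv)))

-- `A ⧸ B` and `A ⧸ C` have two elements each, so automorphisms act trivially on both and hence on
-- `A ⧸ (B ⊓ C)`. There `u + v` spans a diagonal, which `g` does not preserve.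
theorem not_characteristicIsFullyInvariant_of_two_layers (hA : A.IsFullyInvariant)
    (hB : B.IsFullyInvariant) (hC : C.IsFullyInvariant) (hres : ∀ r : R, π ∣ r ∨ π ∣ r - 1)
    (hBA : B ≤ A) (hu : ∀ x ∈ A, x ∈ B ∨ x - u ∈ B) (hv : ∀ x ∈ A, x ∈ C ∨ x - v ∈ C)
    (huA : u ∈ A)
    (huB : u ∉ B) (hvB : v ∈ B) (hπu : π • u ∈ B) (huC : u ∈ C) (hvC : v ∉ C) (hπv : π • v ∈ C)
    {g : Module.End R M} (hg : g (u + v) = u) : ¬ CharacteristicIsFullyInvariant R M := by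
  intro h
  have hYA : B ⊓ C ⊔ R ∙ (u + v) ≤ A := by
    rw [sup_le_iff, Submodule.span_singleton_le_iff_mem]
    exact ⟨inf_le_left.trans hBA, A.add_mem huA (hBA hvB)⟩
  have hY := h _ (isCharacteristic_of_inf_le hA hB hC hu hv le_sup_left hYA)
  have hmem := hY g (Submodule.mem_sup_right (Submodule.mem_span_singleton_self (u + v)))
  rw [Submodule.mem_comap, hg] at hmem
  exact notMem_sup_span_add hres huB hvB hπu huC hvC hπv hmem

end TwoLayers

section TorsionRadical

open scoped Pointwise

variable {R M : Type*} [CommRing R] [AddCommGroup M] [Module R M]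

theorem isFullyInvariant_torsionBy (r : R) : (Submodule.torsionBy R M r).IsFullyInvariant := by
  intro g x hx
  rw [Submodule.mem_torsionBy_iff] at hx
  rw [Submodule.mem_comap, Submodule.mem_torsionBy_iff, ← map_smul, hx, map_zero]

theorem isFullyInvariant_pointwise_smul {S : Submodule R M} (hS : S.IsFullyInvariant)
    (r : R) : (r • S).IsFullyInvariant := by
  rintro g _ ⟨x, hx, rfl⟩
  exact ⟨g x, hS g hx, (map_smul g r x).symm⟩

theorem isFullyInvariant_sup {S T : Submodule R M} (hS : S.IsFullyInvariant)
    (hT : T.IsFullyInvariant) : (S ⊔ T).IsFullyInvariant :=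
  (fullyInvariantSubmodule R M).supClosed hS hT

variable (M) in
/-- The submodule of `M[π ^ (k + 1)]` that is spanned by the elements of smaller order and those of
positive height. For a direct sum of cyclic modules `R ⧸ (π ^ t)`, the quotient of `M[π ^ (k + 1)]`
by it has one copy of `R ⧸ (π)` for each summand with `t = k + 1`. -/
def torsionRadical (π : R) (k : ℕ) : Submodule R M :=
  Submodule.torsionBy R M (π ^ k) ⊔ π • Submodule.torsionBy R M (π ^ (k + 2))

variable {π : R} {k l : ℕ} {x : M}

theorem isFullyInvariant_torsionRadical : (torsionRadical M π k).IsFullyInvariant :=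
  isFullyInvariant_sup (isFullyInvariant_torsionBy _)
    (isFullyInvariant_pointwise_smul (isFullyInvariant_torsionBy _) π)

theorem torsionBy_pow_le_of_le (h : k ≤ l) :
    Submodule.torsionBy R M (π ^ k) ≤ Submodule.torsionBy R M (π ^ l) :=
  Submodule.torsionBy_le_torsionBy_of_dvd _ _ (pow_dvd_pow π h)

theorem smul_mem_torsionBy_pow :
    π • x ∈ Submodule.torsionBy R M (π ^ k) ↔ x ∈ Submodule.torsionBy R M (π ^ (k + 1)) := by
  rw [Submodule.mem_torsionBy_iff, Submodule.mem_torsionBy_iff, smul_smul, pow_succ]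

theorem torsionRadical_le_torsionBy :
    torsionRadical M π k ≤ Submodule.torsionBy R M (π ^ (k + 1)) := by
  refine sup_le (torsionBy_pow_le_of_le k.le_succ) ?_
  rintro _ ⟨x, hx, rfl⟩
  exact smul_mem_torsionBy_pow.2 hx

theorem torsionRadical_le_sup_smul_top :
    torsionRadical M π k ≤ Submodule.torsionBy R M (π ^ k) ⊔ π • (⊤ : Submodule R M) :=
  sup_le_sup_left (Submodule.map_mono le_top) _

theorem smul_notMem_sup_smul_torsionRadical (hkl : k + 2 ≤ l)
    (hx : x ∉ Submodule.torsionBy R M (π ^ l) ⊔ π • ⊤) :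
    π • x ∉ Submodule.torsionBy R M (π ^ (k + 1)) ⊔ π • torsionRadical M π l := by
  intro h
  obtain ⟨y, hy, _, ⟨w, hw, rfl⟩, hyw⟩ := Submodule.mem_sup.1 h
  rw [DistribSMul.toLinearMap_apply, ← eq_sub_iff_add_eq, ← smul_sub] at hyw
  have hxw : x - w ∈ Submodule.torsionBy R M (π ^ l) :=
    torsionBy_pow_le_of_le hkl (smul_mem_torsionBy_pow.1 (hyw ▸ hy))
  rw [← sub_add_cancel x w] at hx
  exact hx (add_mem (Submodule.mem_sup_left hxw) (torsionRadical_le_sup_smul_top hw))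

-- The factor `π` separates the layers: `π • v` still has larger order than `u`, but also larger
-- height, so neither of the two generates the other under endomorphisms.
theorem not_characteristicIsFullyInvariant_of_torsionRadical {u v : M} {g : Module.End R M}
    (hres : ∀ r : R, π ∣ r ∨ π ∣ r - 1) (hkl : k + 2 ≤ l)
    (hu : u ∈ Submodule.torsionBy R M (π ^ (k + 1)))
    (hv : v ∈ Submodule.torsionBy R M (π ^ (l + 1)))
    (hu_span : ∀ x ∈ Submodule.torsionBy R M (π ^ (k + 1)),
      x ∈ torsionRadical M π k ∨ x - u ∈ torsionRadical M π k)
    (hv_span : ∀ x ∈ Submodule.torsionBy R M (π ^ (l + 1)),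
      x ∈ torsionRadical M π l ∨ x - v ∈ torsionRadical M π l)
    (hu_notMem : u ∉ Submodule.torsionBy R M (π ^ k) ⊔ π • ⊤)
    (hv_notMem : v ∉ Submodule.torsionBy R M (π ^ l) ⊔ π • ⊤) (hgu : g u = u) (hgv : g v = 0) :
    ¬ CharacteristicIsFullyInvariant R M := by
  let T (n : ℕ) : Submodule R M := Submodule.torsionBy R M (π ^ n)
  let W (n : ℕ) : Submodule R M := torsionRadical M π n
  let A := T (k + 1) ⊔ π • T (l + 1)
  let B := W k ⊔ π • T (l + 1)
  let C := T (k + 1) ⊔ π • W l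
  have hA : A.IsFullyInvariant := isFullyInvariant_sup (isFullyInvariant_torsionBy _)
    (isFullyInvariant_pointwise_smul (isFullyInvariant_torsionBy _) π)
  have hB : B.IsFullyInvariant := isFullyInvariant_sup isFullyInvariant_torsionRadical
    (isFullyInvariant_pointwise_smul (isFullyInvariant_torsionBy _) π)
  have hC : C.IsFullyInvariant := isFullyInvariant_sup (isFullyInvariant_torsionBy _)
    (isFullyInvariant_pointwise_smul isFullyInvariant_torsionRadical π)
  have hBA : B ≤ A := sup_le_sup_right torsionRadical_le_torsionBy _
  have hAB (x : M) (hx : x ∈ A) : x ∈ B ∨ x - u ∈ B := by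
    obtain ⟨y, hy, z, hz, rfl⟩ := Submodule.mem_sup.1 hx
    rw [add_sub_right_comm]
    exact (hu_span y hy).imp (Submodule.add_mem_sup · hz) (Submodule.add_mem_sup · hz)
  have hAC (x : M) (hx : x ∈ A) : x ∈ C ∨ x - π • v ∈ C := by
    obtain ⟨y, hy, _, ⟨z, hz, rfl⟩, rfl⟩ := Submodule.mem_sup.1 hx
    rw [add_sub_assoc, DistribSMul.toLinearMap_apply, ← smul_sub]
    exact (hv_span z hz).imp
      (fun h ↦ Submodule.add_mem_sup hy (Submodule.smul_mem_pointwise_smul _ π _ h))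
      (fun h ↦ Submodule.add_mem_sup hy (Submodule.smul_mem_pointwise_smul _ π _ h))
  have huB : u ∉ B := fun h ↦ hu_notMem
    (sup_le torsionRadical_le_sup_smul_top (le_sup_of_le_right (Submodule.map_mono le_top)) h)
  have hvB : π • v ∈ B := Submodule.mem_sup_right (Submodule.smul_mem_pointwise_smul _ π _ hv)
  have hπu : π • u ∈ B := Submodule.mem_sup_left (Submodule.mem_sup_left
    (smul_mem_torsionBy_pow.2 hu))
  have hπv : π • π • v ∈ C := Submodule.mem_sup_right (Submodule.smul_mem_pointwise_smul _ π _
    (Submodule.mem_sup_left (smul_mem_torsionBy_pow.2 hv)))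
  exact not_characteristicIsFullyInvariant_of_two_layers hA hB hC hres hBA hAB hAC
    (Submodule.mem_sup_left hu) huB hvB hπu (Submodule.mem_sup_left hu)
    (smul_notMem_sup_smul_torsionRadical hkl hv_notMem) hπv
    (g := g) (by rw [map_add, map_smul, hgu, hgv, smul_zero, add_zero])

end TorsionRadical

section PiQuotient

open scoped Pointwise

variable {R ι : Type*} [CommRing R] {π : R} {t : ι → ℕ} {p q : ι} {k : ℕ}

theorem smul_mk_eq_zero_iff {r s x : R} :
    r • (Submodule.Quotient.mk x : R ⧸ R ∙ s) = 0 ↔ s ∣ r * x := by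
  rw [← Submodule.Quotient.mk_smul, Submodule.Quotient.mk_eq_zero, smul_eq_mul]
  exact Ideal.mem_span_singleton

section Single

variable [DecidableEq ι]

theorem single_mk_mem_torsionBy_iff {r x : R} {s : ι → R} :
    Pi.single p (Submodule.Quotient.mk x) ∈ Submodule.torsionBy R (∀ i, R ⧸ R ∙ s i) r ↔
      s p ∣ r * x := by
  rw [Submodule.mem_torsionBy_iff, ← Pi.single_smul, Pi.single_eq_zero_iff, smul_mk_eq_zero_iff]

theorem single_mk_mul_mem_torsionRadical {x : R} (hx : π ^ t p ∣ π ^ (k + 2) * x) :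
    Pi.single p (Submodule.Quotient.mk (π * x)) ∈ torsionRadical (∀ i, R ⧸ R ∙ π ^ t i) π k := by
  refine Submodule.mem_sup_right ⟨Pi.single p (Submodule.Quotient.mk x),
    single_mk_mem_torsionBy_iff.2 hx, ?_⟩
  rw [DistribSMul.toLinearMap_apply, ← Pi.single_smul]
  rfl

variable [IsDomain R]

theorem single_apply_mem_torsionRadical (hπ : π ≠ 0) {x : ∀ i, R ⧸ R ∙ π ^ t i}
    (hx : x ∈ Submodule.torsionBy R _ (π ^ (k + 1))) (hp : t p ≠ k + 1) :
    Pi.single p (x p) ∈ torsionRadical (∀ i, R ⧸ R ∙ π ^ t i) π k := by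
  obtain ⟨y, hy⟩ := Submodule.Quotient.mk_surjective _ (x p)
  rw [← hy]
  have hdvd : π ^ t p ∣ π ^ (k + 1) * y :=
    smul_mk_eq_zero_iff.1 (hy ▸ congrFun ((Submodule.mem_torsionBy_iff _ _).1 hx) p)
  rcases lt_or_gt_of_ne hp with hlt | hgt
  · exact Submodule.mem_sup_left (single_mk_mem_torsionBy_iff.2
      ((pow_dvd_pow π (Nat.le_of_lt_succ hlt)).mul_right y))
  · obtain ⟨z, rfl⟩ : π ∣ y := by
      rw [← mul_dvd_mul_iff_left (pow_ne_zero (k + 1) hπ), ← pow_succ]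
      exact (pow_dvd_pow π hgt).trans hdvd
    exact single_mk_mul_mem_torsionRadical (by rwa [pow_succ, mul_assoc])

theorem mem_torsionRadical_or_sub_single_mem [Finite ι] (hπ : π ≠ 0)
    (hres : ∀ r : R, π ∣ r ∨ π ∣ r - 1) (hp : t p = k + 1) (huniq : ∀ i, t i = k + 1 → i = p)
    {x : ∀ i, R ⧸ R ∙ π ^ t i} (hx : x ∈ Submodule.torsionBy R _ (π ^ (k + 1))) :
    x ∈ torsionRadical (∀ i, R ⧸ R ∙ π ^ t i) π k ∨
      x - Pi.single p (Submodule.Quotient.mk 1) ∈ torsionRadical (∀ i, R ⧸ R ∙ π ^ t i) π k := by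
  let W := torsionRadical (∀ i, R ⧸ R ∙ π ^ t i) π k
  obtain ⟨y, hy⟩ := Submodule.Quotient.mk_surjective _ (x p)
  have sub_single_mem {c : R} (hc : π ∣ y - c) :
      x - Pi.single p (Submodule.Quotient.mk c) ∈ W := by
    refine AddSubmonoid.pi_mem_of_single_mem (H := W.toAddSubmonoid) _ fun i ↦ ?_
    rcases eq_or_ne i p with rfl | hip
    · rw [Pi.sub_apply, Pi.single_eq_same, ← hy, ← Submodule.Quotient.mk_sub]
      obtain ⟨z, hz⟩ := hc
      rw [hz]
      exact single_mk_mul_mem_torsionRadical (hp ▸ (pow_dvd_pow π k.succ.le_succ).mul_right z)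
    · rw [Pi.sub_apply, Pi.single_eq_of_ne hip, sub_zero]
      exact single_apply_mem_torsionRadical hπ hx (mt (huniq i) hip)
  refine (hres y).imp (fun h ↦ ?_) sub_single_mem
  simpa using sub_single_mem (c := 0) (by rwa [sub_zero])

theorem single_mk_one_notMem_sup (hπ : Irreducible π) (hp : t p = k + 1) :
    Pi.single p (Submodule.Quotient.mk 1) ∉
      Submodule.torsionBy R (∀ i, R ⧸ R ∙ π ^ t i) (π ^ k) ⊔ π • ⊤ := by
  intro h
  obtain ⟨x, hx, _, ⟨y, -, rfl⟩, hxy⟩ := Submodule.mem_sup.1 h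
  obtain ⟨z, hz⟩ := Submodule.Quotient.mk_surjective _ (y p)
  have hzero : π ^ k • (x + π • y - π • y) p = 0 := by
    rw [add_sub_cancel_right]
    exact congrFun ((Submodule.mem_torsionBy_iff _ _).1 hx) p
  have hdvd : π ^ (k + 1) ∣ π ^ k * (1 - π * z) := by
    rw [← hp, ← smul_mk_eq_zero_iff, Submodule.Quotient.mk_sub, ← smul_eq_mul π,
      Submodule.Quotient.mk_smul, hz, ← hzero]
    rw [DistribSMul.toLinearMap_apply] at hxy
    rw [hxy, Pi.sub_apply, Pi.single_eq_same, Pi.smul_apply]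
  rw [pow_succ, mul_dvd_mul_iff_left (pow_ne_zero k hπ.ne_zero)] at hdvd
  exact hπ.not_dvd_one ((dvd_sub_left (dvd_mul_right π z)).1 hdvd)

end Single

theorem not_characteristicIsFullyInvariant_pi_quotient [IsDomain R] [Finite ι] (hπ : Irreducible π)
    (hres : ∀ r : R, π ∣ r ∨ π ∣ r - 1) {a b : ℕ} (hab : a + 2 ≤ b)
    (ha : ∃! i, t i = a + 1) (hb : ∃! i, t i = b + 1) :
    ¬ CharacteristicIsFullyInvariant R (∀ i, R ⧸ R ∙ π ^ t i) := by
  classical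
  obtain ⟨p, hp, hp_unique⟩ := ha
  obtain ⟨q, hq, hq_unique⟩ := hb
  have hpq : p ≠ q := by
    rintro rfl
    omega
  refine not_characteristicIsFullyInvariant_of_torsionRadical hres hab
    (u := Pi.single p (Submodule.Quotient.mk 1)) (v := Pi.single q (Submodule.Quotient.mk 1))
    (single_mk_mem_torsionBy_iff.2 (by rw [hp, mul_one]))
    (single_mk_mem_torsionBy_iff.2 (by rw [hq, mul_one]))
    (fun _ ↦ mem_torsionRadical_or_sub_single_mem hπ.ne_zero hres hp hp_unique)
    (fun _ ↦ mem_torsionRadical_or_sub_single_mem hπ.ne_zero hres hq hq_unique)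
    (single_mk_one_notMem_sup hπ hp) (single_mk_one_notMem_sup hπ hq)
    (g := LinearMap.single R _ p ∘ₗ LinearMap.proj p) ?_ ?_
  · rw [LinearMap.comp_apply, LinearMap.proj_apply, Pi.single_eq_same, LinearMap.single_apply]
  · rw [LinearMap.comp_apply, LinearMap.proj_apply, Pi.single_eq_of_ne hpq, map_zero]

theorem characteristicIsFullyInvariant_pi_quotient_iff [IsDomain R] [IsPrincipalIdealRing R]
    [Finite ι] (hπ : Irreducible π) (hres : ∀ r : R, π ∣ r ∨ π ∣ r - 1) :
    CharacteristicIsFullyInvariant R (∀ i, R ⧸ R ∙ π ^ t i) ↔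
      ∀ i j, 1 ≤ i → (∃! k, t k = i) → (∃! k, t k = j) → i < j → j = i + 1 := by
  refine ⟨fun h i j hi huniq_i huniq_j hij ↦ ?_, characteristicIsFullyInvariant_pi_quotient hπ t⟩
  by_contra hj
  obtain ⟨a, rfl⟩ := Nat.exists_eq_add_of_le' hi
  obtain ⟨b, rfl⟩ := Nat.exists_eq_add_of_lt hij
  refine not_characteristicIsFullyInvariant_pi_quotient hπ hres (b := a + 1 + b) ?_
    huniq_i huniq_j h
  omega

end PiQuotient

section Ulm

open Polynomial

variable {ι : Type*} {t : ι → ℕ} {r : ℕ}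

theorem exists_mk_eq_smul_mk_X_pow {t : ℕ} (hrt : r < t) {y : K[X]}
    (hy : X ^ t ∣ X ^ (r + 1) * y) :
    ∃ c : K, (Submodule.Quotient.mk (X ^ r * y) : K[X] ⧸ K[X] ∙ (X ^ t : K[X])) =
      c • Submodule.Quotient.mk (X ^ (t - 1)) := by
  obtain ⟨t, rfl⟩ := Nat.exists_eq_add_of_lt hrt
  obtain ⟨z, rfl⟩ : X ^ t ∣ y := by
    rwa [← mul_dvd_mul_iff_left (pow_ne_zero (r + 1) X_ne_zero), ← pow_add, add_right_comm]
  refine ⟨z.coeff 0, ?_⟩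
  rw [← Submodule.Quotient.mk_smul, Submodule.Quotient.eq, smul_eq_C_mul]
  refine Ideal.mem_span_singleton.2 ?_
  have hz : X ^ r * (X ^ t * z) - C (z.coeff 0) * X ^ (r + t + 1 - 1) =
      X ^ (r + t) * (z - C (z.coeff 0)) := by
    rw [Nat.add_sub_cancel]
    ring
  rw [hz, pow_succ]
  exact mul_dvd_mul_left _ X_dvd_sub_C

theorem mk_X_pow_pred_ne_zero {t : ℕ} (ht : t ≠ 0) :
    (Submodule.Quotient.mk (X ^ (t - 1)) : K[X] ⧸ K[X] ∙ (X ^ t : K[X])) ≠ 0 := by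
  rw [Ne, Submodule.Quotient.mk_eq_zero]
  intro h
  have := (pow_dvd_pow_iff (X_ne_zero (R := K)) not_isUnit_X).1 (Ideal.mem_span_singleton.1 h)
  omega

theorem pow_apply_of_apply {M : Type*} [AddCommGroup M] [Module K[X] M] [Module K M]
    {f : V →ₗ[K] V} (φ : V ≃ₗ[K] M) (hφ : ∀ v, φ (f v) = (X : K[X]) • φ v) (v : V) :
    φ ((f ^ r) v) = (X ^ r : K[X]) • φ v := by
  induction r with
  | zero => simp
  | succ r ih => rw [pow_succ', Module.End.mul_apply, hφ, ih, smul_smul, pow_succ']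

theorem linearIndependent_subtype_single [DecidableEq ι] {N : ι → Type*} [∀ i, AddCommGroup (N i)]
    [∀ i, Module K (N i)] {p : ι → Prop} {z : ∀ i, N i} (hz : ∀ i, p i → z i ≠ 0) :
    LinearIndependent K fun i : {i // p i} ↦ (Pi.single i.1 (z i) : ∀ i, N i) := by
  rw [linearIndependent_iff']
  intro s c hc i hi
  have hci : (∑ j ∈ s, c j • (Pi.single j.1 (z j) : ∀ i, N i)) i.1 = 0 := congrFun hc i.1
  rw [Finset.sum_apply, Finset.sum_eq_single_of_mem i hi fun j _ hji ↦ by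
    rw [Pi.smul_apply, Pi.single_eq_of_ne (Subtype.coe_ne_coe.2 hji.symm), smul_zero],
    Pi.smul_apply, Pi.single_eq_same] at hci
  exact (smul_eq_zero.1 hci).resolve_right (hz i i.2)

variable {f : V →ₗ[K] V} (φ : V ≃ₗ[K] ∀ k, K[X] ⧸ K[X] ∙ (X ^ t k : K[X]))

theorem symm_single_mem_ker_inf_range_pow [DecidableEq ι] (hφ : ∀ v, φ (f v) = (X : K[X]) • φ v)
    {k : ι} (hk : r < t k) :
    φ.symm (Pi.single k (Submodule.Quotient.mk (X ^ (t k - 1)))) ∈ ker f ⊓ range (f ^ r) := by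
  refine ⟨φ.injective ?_, φ.symm (Pi.single k (Submodule.Quotient.mk (X ^ (t k - 1 - r)))),
    φ.injective ?_⟩
  · rw [hφ, φ.apply_symm_apply, map_zero, ← Pi.single_smul, Pi.single_eq_zero_iff,
      smul_mk_eq_zero_iff, mul_pow_sub_one (Nat.ne_zero_of_lt hk)]
  · rw [pow_apply_of_apply φ hφ, φ.apply_symm_apply, φ.apply_symm_apply, ← Pi.single_smul,
      ← Submodule.Quotient.mk_smul, smul_eq_mul, ← pow_add,
      Nat.add_sub_cancel' (Nat.le_sub_one_of_lt hk)]

theorem ker_inf_range_pow_eq_span [Finite ι] [DecidableEq ι]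
    (hφ : ∀ v, φ (f v) = (X : K[X]) • φ v) :
    ker f ⊓ range (f ^ r) = Submodule.span K (Set.range fun k : {k // r < t k} ↦
      φ.symm (Pi.single k.1 (Submodule.Quotient.mk (X ^ (t k - 1))))) := by
  cases nonempty_fintype ι
  refine le_antisymm ?_ (Submodule.span_le.2 (Set.range_subset_iff.2 fun k ↦
    symm_single_mem_ker_inf_range_pow φ hφ k.2))
  rintro _ ⟨hv, w, rfl⟩
  rw [← φ.symm_apply_apply ((f ^ r) w), ← Finset.univ_sum_single (φ _), map_sum]
  refine Submodule.sum_mem _ fun k _ ↦ ?_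
  obtain ⟨y, hy⟩ := Submodule.Quotient.mk_surjective _ (φ w k)
  have hmk : φ ((f ^ r) w) k = Submodule.Quotient.mk (X ^ r * y) := by
    rw [pow_apply_of_apply φ hφ]
    exact congrArg ((X ^ r : K[X]) • ·) hy.symm
  have hdvd : X ^ t k ∣ X ^ (r + 1) * y := by
    rw [pow_succ', mul_assoc, ← smul_mk_eq_zero_iff, ← hmk]
    have hXv : (X : K[X]) • φ ((f ^ r) w) = 0 := by rw [← hφ, hv, map_zero]
    exact congrFun hXv k
  rw [hmk]
  rcases lt_or_ge r (t k) with hrt | htr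
  · obtain ⟨c, hc⟩ := exists_mk_eq_smul_mk_X_pow hrt hdvd
    have hsmul := (φ.symm.toLinearMap ∘ₗ LinearMap.single K _ k).map_smul c
      (Submodule.Quotient.mk (X ^ (t k - 1)))
    rw [hc]
    exact hsmul ▸ Submodule.smul_mem _ c (Submodule.subset_span ⟨⟨k, hrt⟩, rfl⟩)
  · have hzero : (Submodule.Quotient.mk (X ^ r * y) : K[X] ⧸ K[X] ∙ (X ^ t k : K[X])) = 0 :=
      (Submodule.Quotient.mk_eq_zero _).2
        (Ideal.mem_span_singleton.2 ((pow_dvd_pow X htr).mul_right y))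
    rw [hzero, Pi.single_zero, map_zero]
    exact zero_mem _

theorem finrank_ker_inf_range_pow [Fintype ι] (hφ : ∀ v, φ (f v) = (X : K[X]) • φ v) :
    Module.finrank K ↥(ker f ⊓ range (f ^ r)) = Finset.card {k | r < t k} := by
  classical
  rw [ker_inf_range_pow_eq_span φ hφ, finrank_span_eq_card, Fintype.card_subtype]
  exact (linearIndependent_subtype_single fun k (hk : r < t k) ↦
    mk_X_pow_pred_ne_zero (Nat.ne_zero_of_lt hk)).map' φ.symm.toLinearMap φ.symm.ker

theorem ulm_eq_card [Fintype ι] (hφ : ∀ v, φ (f v) = (X : K[X]) • φ v) (hr : 1 ≤ r) :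
    ulm f r = Finset.card {k | t k = r} := by
  classical
  obtain ⟨r, rfl⟩ := Nat.exists_eq_add_of_le' hr
  have hsub : (Finset.univ.filter fun k ↦ t k = r + 1) =
      (Finset.univ.filter fun k ↦ r < t k) \ Finset.univ.filter fun k ↦ r + 1 < t k := by
    ext k
    simp only [Finset.mem_filter_univ, Finset.mem_sdiff]
    omega
  rw [ulm, finrank_ker_inf_range_pow φ hφ, finrank_ker_inf_range_pow φ hφ, hsub,
    Finset.card_sdiff_of_subset, Nat.add_sub_cancel]
  exact Finset.monotone_filter_right _ fun k _ hk ↦ (Nat.lt_succ_self r).trans hk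

theorem ulm_eq_one_iff [Finite ι] (hφ : ∀ v, φ (f v) = (X : K[X]) • φ v) (hr : 1 ≤ r) :
    ulm f r = 1 ↔ ∃! k, t k = r := by
  cases nonempty_fintype ι
  rw [ulm_eq_card φ hφ hr, Finset.card_eq_one_iff_existsUnique]
  simp only [Finset.mem_filter_univ]

end Ulm

section AEval

open Polynomial Module

variable {f : V →ₗ[K] V}

theorem exists_aeval_end_of_commute {g : V →ₗ[K] V} (hg : g ∘ₗ f = f ∘ₗ g) :
    ∃ G : End K[X] (AEval' f), ∀ v, G (AEval'.of f v) = AEval'.of f (g v) := by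
  refine ⟨ofAEval f ((AEval'.of f).toLinearMap ∘ₗ g) fun v ↦ ?_, fun v ↦ rfl⟩
  exact (congrArg (AEval'.of f) (LinearMap.congr_fun hg v)).trans (AEval'.X_smul_of f (g v)).symm

theorem exists_commute_of_aeval_end (G : End K[X] (AEval' f)) :
    ∃ g : V →ₗ[K] V, g ∘ₗ f = f ∘ₗ g ∧ ∀ v, AEval'.of f (g v) = G (AEval'.of f v) := by
  refine ⟨(AEval'.of f).symm.toLinearMap ∘ₗ G.restrictScalars K ∘ₗ (AEval'.of f).toLinearMap,
    LinearMap.ext fun v ↦ ?_, fun v ↦ (AEval'.of f).apply_symm_apply _⟩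
  simp [← AEval'.X_smul_of]

theorem exists_aeval_equiv_of_commute {α : V ≃ₗ[K] V}
    (hα : (α : V →ₗ[K] V) ∘ₗ f = f ∘ₗ (α : V →ₗ[K] V)) :
    ∃ A : AEval' f ≃ₗ[K[X]] AEval' f, ∀ v, A (AEval'.of f v) = AEval'.of f (α v) := by
  refine ⟨LinearEquiv.ofAEval f (α ≪≫ₗ AEval'.of f) fun v ↦ ?_, fun v ↦ rfl⟩
  exact (congrArg (AEval'.of f) (LinearMap.congr_fun hα v)).trans (AEval'.X_smul_of f (α v)).symm

theorem exists_commute_of_aeval_equiv (A : AEval' f ≃ₗ[K[X]] AEval' f) :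
    ∃ α : V ≃ₗ[K] V, (α : V →ₗ[K] V) ∘ₗ f = f ∘ₗ (α : V →ₗ[K] V) ∧
      ∀ v, AEval'.of f (α v) = A (AEval'.of f v) := by
  refine ⟨AEval'.of f ≪≫ₗ A.restrictScalars K ≪≫ₗ (AEval'.of f).symm,
    LinearMap.ext fun v ↦ ?_, fun v ↦ (AEval'.of f).apply_symm_apply _⟩
  simp [← AEval'.X_smul_of]

theorem hinv_mapSubmodule_symm_iff (S : Submodule K[X] (AEval' f)) :
    Hinv f ((AEval.mapSubmodule K V f).symm S) ↔ S.IsFullyInvariant := by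
  constructor
  · intro h G v hv
    obtain ⟨v, rfl⟩ := (AEval'.of f).surjective v
    obtain ⟨g, hg, hgG⟩ := exists_commute_of_aeval_end G
    rw [Submodule.mem_comap, ← hgG]
    exact h g hg ⟨v, hv, rfl⟩
  · rintro h g hg _ ⟨v, hv, rfl⟩
    obtain ⟨G, hG⟩ := exists_aeval_end_of_commute hg
    have hGv : G (AEval'.of f v) ∈ S := h G hv
    rwa [hG] at hGv

theorem chinv_mapSubmodule_symm_iff (S : Submodule K[X] (AEval' f)) :
    Chinv f ((AEval.mapSubmodule K V f).symm S) ↔ IsCharacteristic S := by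
  constructor
  · intro h A v hv
    obtain ⟨v, rfl⟩ := (AEval'.of f).surjective v
    obtain ⟨α, hα, hαA⟩ := exists_commute_of_aeval_equiv A
    rw [Submodule.mem_comap, LinearEquiv.coe_coe, ← hαA]
    exact (h.2 α hα).le ⟨v, hv, rfl⟩
  · intro h
    refine ⟨Submodule.map_le_iff_le_comap.2 ((AEval.mapSubmodule K V f).symm S).2,
      fun α hα ↦ le_antisymm ?_ fun v hv ↦ ⟨α.symm v, ?_, α.apply_symm_apply v⟩⟩
    all_goals obtain ⟨A, hA⟩ := exists_aeval_equiv_of_commute hα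
    · rintro _ ⟨v, hv, rfl⟩
      have hAv : A (AEval'.of f v) ∈ S := h A hv
      rwa [hA] at hAv
    · have hAv : A.symm (AEval'.of f v) ∈ S := h A.symm hv
      rwa [← α.apply_symm_apply v, ← hA, A.symm_apply_apply] at hAv

theorem chinv_imp_hinv_iff : (∀ X : Submodule K V, Chinv f X → Hinv f X) ↔
    CharacteristicIsFullyInvariant K[X] (AEval' f) := by
  constructor
  · intro h S hS
    exact (hinv_mapSubmodule_symm_iff S).1 (h _ ((chinv_mapSubmodule_symm_iff S).2 hS))
  · intro h X hX
    have hf : X ∈ (Algebra.lsmul K K V f).invtSubmodule := Submodule.map_le_iff_le_comap.1 hX.1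
    let S := AEval.mapSubmodule K V f ⟨X, hf⟩
    have hS : ((AEval.mapSubmodule K V f).symm S : Submodule K V) = X :=
      congrArg Subtype.val ((AEval.mapSubmodule K V f).symm_apply_apply ⟨X, hf⟩)
    rw [← hS, hinv_mapSubmodule_symm_iff]
    rw [← hS, chinv_mapSubmodule_symm_iff] at hX
    exact h S hX

theorem exists_linearEquiv_pi_quotient_X_pow [FiniteDimensional K V] (hf : IsNilpotent f) :
    ∃ (d : ℕ) (t : Fin d → ℕ),
      Nonempty (AEval' f ≃ₗ[K[X]] ∀ k, K[X] ⧸ K[X] ∙ (X ^ t k : K[X])) := by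
  obtain ⟨n, hn⟩ := hf
  have htorsion : IsTorsion' (AEval' f) (Submonoid.powers (X : K[X])) := by
    rw [Submodule.isTorsion'_powers_iff]
    intro v
    obtain ⟨v, rfl⟩ := (AEval'.of f).surjective v
    exact ⟨n, by rw [AEval'.X_pow_smul_of, hn, zero_smul, map_zero]⟩
  obtain ⟨d, t, ⟨e⟩⟩ := torsion_by_prime_power_decomposition irreducible_X htorsion
  exact ⟨d, t, ⟨e.trans (DirectSum.linearEquivFunOnFintype K[X] (Fin d) _)⟩⟩

theorem X_dvd_or_X_dvd_sub_one (r : (ZMod 2)[X]) : X ∣ r ∨ X ∣ r - 1 := by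
  rw [X_dvd_iff, X_dvd_iff, coeff_sub, coeff_one_zero]
  generalize r.coeff 0 = c
  revert c
  decide

end AEval

theorem stmt17 {V : Type*} [AddCommGroup V] [Module (ZMod 2) V]
    [FiniteDimensional (ZMod 2) V] (f : V →ₗ[ZMod 2] V) (hf : IsNilpotent f) :
    (∀ X : Submodule (ZMod 2) V, Chinv f X → Hinv f X) ↔
      (∀ i j : ℕ, 1 ≤ i → ulm f i = 1 → ulm f j = 1 → i < j → j = i + 1) := by
  obtain ⟨d, t, ⟨e⟩⟩ := exists_linearEquiv_pi_quotient_X_pow hf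
  let φ := Module.AEval'.of f ≪≫ₗ e.restrictScalars (ZMod 2)
  have hφ (v : V) : φ (f v) = (Polynomial.X : Polynomial (ZMod 2)) • φ v := by
    rw [LinearEquiv.trans_apply, ← Module.AEval'.X_smul_of]
    exact e.map_smul _ _
  rw [chinv_imp_hinv_iff, characteristicIsFullyInvariant_congr e,
    characteristicIsFullyInvariant_pi_quotient_iff Polynomial.irreducible_X X_dvd_or_X_dvd_sub_one]
  refine forall₃_congr fun i j hi ↦ ?_
  rw [ulm_eq_one_iff φ hφ hi]
  refine forall_congr' fun _ ↦ ⟨fun h hj hij ↦ ?_, fun h hj hij ↦ ?_⟩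
  · exact h ((ulm_eq_one_iff φ hφ (hi.trans hij.le)).1 hj) hij
  · exact h ((ulm_eq_one_iff φ hφ (hi.trans hij.le)).2 hj) hij
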